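/- arXiv:1008.3405 — 7 statements merged into one kernel-verified Lean document; each statement's English description precedes it below -/
import Mathlib

section
/- A pair (p⁰,q⁰) ∈ G × A satisfies the formal ε = 0 system { a⊥(p⁰,η) + a⊥(q⁰,η) = ℓ(η) for all η ∈ G, and a∥(q⁰,ξ) = 0 for all ξ ∈ A } if and only if q⁰ = 0 and p⁰ is the unique solution of the Limit problem (L). In particular this system has a unique solution. -/
/-! If `q ∈ A` satisfies `a∥(q,ξ) = 0` for all `ξ ∈ A`, then `ξ = q` puts `q` in `G ∩ A = {0}`,
and what remains of the `ε = 0` system is the Limit problem. On `G` the coercivity assumption reads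
`α‖φ‖² ≤ a⊥(φ,φ)`. This gives uniqueness, since `G` is closed under differences by Cauchy–Schwarz
for `a∥` (`IsCSPForm.apply_eq_zero`). As `G` is the kernel of `id - P`, it is a closed subspace, and
existence follows from the Lax–Milgram theorem (`IsCSPForm.exists_solution_on`). -/

/-- A continuous, symmetric, positive semidefinite bilinear form on a real
inner-product space. -/
def IsCSPForm {V : Type*} [NormedAddCommGroup V] [InnerProductSpace ℝ V]
    (a : V →ₗ[ℝ] V →ₗ[ℝ] ℝ) : Prop :=
  (∀ x y : V, a x y = a y x) ∧ (∀ x : V, 0 ≤ a x x) ∧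
    (∃ C : ℝ, ∀ x y : V, |a x y| ≤ C * ‖x‖ * ‖y‖)

/-- Cauchy–Schwarz for semidefinite forms: isotropic vectors lie in the radical. -/
theorem IsCSPForm.apply_eq_zero {V : Type*} [NormedAddCommGroup V] [InnerProductSpace ℝ V]
    {a : V →ₗ[ℝ] V →ₗ[ℝ] ℝ} (ha : IsCSPForm a) {x : V} (hx : a x x = 0) (y : V) :
    a x y = 0 := by
  have h := LinearMap.BilinForm.apply_mul_apply_le_of_forall_zero_le a ha.2.1 x y
  rw [hx, ha.1 y x, zero_mul] at h
  exact mul_self_eq_zero.mp (le_antisymm h (mul_self_nonneg _))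

/-- Lax–Milgram on a closed subspace, for a form that need only be coercive there. -/
theorem IsCSPForm.exists_solution_on {V : Type*} [NormedAddCommGroup V] [InnerProductSpace ℝ V]
    [CompleteSpace V] {a : V →ₗ[ℝ] V →ₗ[ℝ] ℝ} (ha : IsCSPForm a) (G : Submodule ℝ V)
    (hG : IsClosed (G : Set V)) {α : ℝ} (hα : 0 < α)
    (hcoer : ∀ φ ∈ G, α * ‖φ‖ ^ 2 ≤ a φ φ) (ell : V →L[ℝ] ℝ) :
    ∃ p ∈ G, ∀ ψ ∈ G, a p ψ = ell ψ := by
  have : CompleteSpace G := hG.completeSpace_coe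
  obtain ⟨C, hC⟩ := ha.2.2
  let B : G →L[ℝ] G →L[ℝ] ℝ :=
    LinearMap.mkContinuous₂ (a.domRestrict₁₂ G G) C fun x y => hC x y
  have hB : IsCoercive B := by
    refine ⟨α, hα, fun u => ?_⟩
    have h := hcoer u u.2
    rw [pow_two, ← mul_assoc] at h
    exact h
  let r : G := (InnerProductSpace.toDual ℝ G).symm (ell.comp G.subtypeL)
  refine ⟨hB.continuousLinearEquivOfBilin.symm r, Subtype.property _, fun ψ hψ => ?_⟩
  have h := hB.continuousLinearEquivOfBilin_apply
    (hB.continuousLinearEquivOfBilin.symm r) ⟨ψ, hψ⟩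
  rw [ContinuousLinearEquiv.apply_symm_apply, InnerProductSpace.toDual_symm_apply] at h
  exact h.symm

/-- a pair (p⁰,q⁰) ∈ G × A satisfies the formal ε = 0 system iff
q⁰ = 0 and p⁰ is the unique solution of the Limit problem (L); in particular
the ε = 0 system has a unique solution.
Here G = {φ : a∥(φ,φ) = 0} and A = {φ : c(φ,ψ) = 0 ∀ ψ ∈ G}. -/
theorem formal_zero_system_characterization
    {V : Type*} [NormedAddCommGroup V] [InnerProductSpace ℝ V] [CompleteSpace V]
    (apar aperp c : V →ₗ[ℝ] V →ₗ[ℝ] ℝ)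
    (hapar : IsCSPForm apar) (haperp : IsCSPForm aperp) (hc : IsCSPForm c)
    (α : ℝ) (hα : 0 < α)
    (hcoer : ∀ φ : V, α * ‖φ‖ ^ 2 ≤ apar φ φ + aperp φ φ)
    -- Hypothesis B: bounded projection P onto G along A, V = G ⊕ A
    (P : V →L[ℝ] V)
    (hPG : ∀ φ : V, apar (P φ) (P φ) = 0)
    (hPA : ∀ φ : V, ∀ ψ : V, apar ψ ψ = 0 → c (φ - P φ) ψ = 0)
    (hPid : ∀ φ : V, apar φ φ = 0 → P φ = φ)
    (hPzero : ∀ φ : V, (∀ ψ : V, apar ψ ψ = 0 → c φ ψ = 0) → P φ = 0)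
    (ell : V →L[ℝ] ℝ) (F₀ : ℝ) (hF₀ : 0 ≤ F₀)
    (hell : ∀ ψ : V, |ell ψ| ≤ F₀ * Real.sqrt (c ψ ψ)) :
    (∀ p q : V, apar p p = 0 → (∀ ψ : V, apar ψ ψ = 0 → c q ψ = 0) →
      (((∀ η : V, apar η η = 0 → aperp p η + aperp q η = ell η) ∧
        (∀ ξ : V, (∀ ψ : V, apar ψ ψ = 0 → c ξ ψ = 0) → apar q ξ = 0))
       ↔ (q = 0 ∧ (∀ ψ : V, apar ψ ψ = 0 → aperp p ψ = ell ψ) ∧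
          (∀ p' : V, apar p' p' = 0 →
            (∀ ψ : V, apar ψ ψ = 0 → aperp p' ψ = ell ψ) → p' = p)))) ∧
    (∃! pq : V × V, apar pq.1 pq.1 = 0 ∧
      (∀ ψ : V, apar ψ ψ = 0 → c pq.2 ψ = 0) ∧
      (∀ η : V, apar η η = 0 → aperp pq.1 η + aperp pq.2 η = ell η) ∧
      (∀ ξ : V, (∀ ψ : V, apar ψ ψ = 0 → c ξ ψ = 0) → apar pq.2 ξ = 0)) := by
  have hmem : ∀ φ : V, P φ = φ ↔ apar φ φ = 0 :=
    fun φ => ⟨fun h => h ▸ hPG φ, hPid φ⟩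
  have hq0 : ∀ q : V, (∀ ψ : V, apar ψ ψ = 0 → c q ψ = 0) →
      (∀ ξ : V, (∀ ψ : V, apar ψ ψ = 0 → c ξ ψ = 0) → apar q ξ = 0) → q = 0 :=
    fun q hqA hq => (hPid q (hq q hqA)).symm.trans (hPzero q hqA)
  have huniq : ∀ p p' : V, apar p p = 0 → apar p' p' = 0 →
      (∀ ψ : V, apar ψ ψ = 0 → aperp p ψ = ell ψ) →
      (∀ ψ : V, apar ψ ψ = 0 → aperp p' ψ = ell ψ) → p' = p := by
    intro p p' hp hp' hs hs'
    have hd : apar (p' - p) (p' - p) = 0 := by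
      simp [hapar.apply_eq_zero hp, hapar.apply_eq_zero hp']
    have hperp : aperp (p' - p) (p' - p) = 0 := by
      rw [map_sub aperp, LinearMap.sub_apply, hs _ hd, hs' _ hd, sub_self]
    have h := hcoer (p' - p)
    rw [hd, hperp, add_zero] at h
    have h0 : ‖p' - p‖ ^ 2 = 0 := by nlinarith [sq_nonneg ‖p' - p‖]
    exact sub_eq_zero.mp (norm_eq_zero.mp (pow_eq_zero_iff two_ne_zero |>.mp h0))
  have hchar : ∀ p q : V, apar p p = 0 → (∀ ψ : V, apar ψ ψ = 0 → c q ψ = 0) →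
      (((∀ η : V, apar η η = 0 → aperp p η + aperp q η = ell η) ∧
        (∀ ξ : V, (∀ ψ : V, apar ψ ψ = 0 → c ξ ψ = 0) → apar q ξ = 0))
       ↔ (q = 0 ∧ (∀ ψ : V, apar ψ ψ = 0 → aperp p ψ = ell ψ) ∧
          (∀ p' : V, apar p' p' = 0 →
            (∀ ψ : V, apar ψ ψ = 0 → aperp p' ψ = ell ψ) → p' = p))) := by
    intro p q hp hqA
    constructor
    · rintro ⟨h1, h2⟩
      obtain rfl := hq0 q hqA h2
      have hs : ∀ ψ : V, apar ψ ψ = 0 → aperp p ψ = ell ψ :=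
        fun ψ hψ => by simpa using h1 ψ hψ
      exact ⟨rfl, hs, fun p' hp' hs' => huniq p p' hp hp' hs hs'⟩
    · rintro ⟨rfl, hs, -⟩
      exact ⟨fun η hη => by simpa using hs η hη, fun ξ _ => by simp⟩
  refine ⟨hchar, ?_⟩
  -- `G` realised as the kernel of the continuous map `id - P`, which makes it visibly closed.
  let G : Submodule ℝ V := LinearMap.ker (ContinuousLinearMap.id ℝ V - P : V →L[ℝ] V).toLinearMap
  have hGmem : ∀ φ : V, φ ∈ G ↔ apar φ φ = 0 := by
    intro φ
    rw [← hmem φ, eq_comm (a := P φ)]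
    simp [G, LinearMap.mem_ker, sub_eq_zero]
  have hGclosed : IsClosed (G : Set V) :=
    (ContinuousLinearMap.id ℝ V - P : V →L[ℝ] V).isClosed_ker
  obtain ⟨p, hpG, hp⟩ := haperp.exists_solution_on G hGclosed hα
    (fun φ hφ => by simpa [(hGmem φ).mp hφ] using hcoer φ) ell
  have hs : ∀ ψ : V, apar ψ ψ = 0 → aperp p ψ = ell ψ := fun ψ hψ => hp ψ ((hGmem ψ).mpr hψ)
  have hpp := (hGmem p).mp hpG
  refine ⟨(p, 0), ⟨hpp, by simp, fun η hη => by simpa using hs η hη, by simp⟩, ?_⟩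
  rintro ⟨p', q'⟩ ⟨hp', hq', h1, h2⟩
  obtain ⟨hq, hs', -⟩ := (hchar p' q' hp' hq').mp ⟨h1, h2⟩
  exact Prod.ext (huniq p p' hpp hp' hs hs') hq
end

section
/- (Theorem 2.1, part 1.) For every ε ∈ (0,1) the AP formulation admits a unique solution (p^ε,q^ε) ∈ G × A; moreover, a pair (p,q) ∈ G × A solves the AP formulation if and only if φ := p + q is the unique solution of the Singular Perturbation problem (P), p = Pφ and q = φ − Pφ. -/
/-- Null vectors of the quadratic form of a positive semidefinite form lie in its kernel. -/
lemma apar_eq_zero_of_null {V : Type*} [NormedAddCommGroup V] [InnerProductSpace ℝ V]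
    {a : V →ₗ[ℝ] V →ₗ[ℝ] ℝ} (ha : IsCSPForm a) {φ : V} (hφ : a φ φ = 0) (ψ : V) :
    a φ ψ = 0 := by
  obtain ⟨hsymm, hpos, -⟩ := ha
  by_contra h
  -- `t ↦ a (ψ + tφ) (ψ + tφ)` is affine with slope `2 a φ ψ`; the chosen `t` makes it `-1`.
  obtain ⟨t, ht⟩ : ∃ t : ℝ, t * (2 * a φ ψ) = -(a ψ ψ + 1) :=
    ⟨-(a ψ ψ + 1) / (2 * a φ ψ), div_mul_cancel₀ _ (mul_ne_zero two_ne_zero h)⟩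
  have key := hpos (ψ + t • φ)
  simp only [map_add, map_smul, LinearMap.add_apply, LinearMap.smul_apply, smul_eq_mul, hφ,
    hsymm ψ φ] at key
  linarith

lemma singular_perturbation_coercive {V : Type*} [NormedAddCommGroup V] [InnerProductSpace ℝ V]
    {apar aperp : V →ₗ[ℝ] V →ₗ[ℝ] ℝ} (hapar : IsCSPForm apar)
    {α : ℝ} (hcoer : ∀ φ : V, α * ‖φ‖ ^ 2 ≤ apar φ φ + aperp φ φ)
    {ε : ℝ} (hε : ε ∈ Set.Ioo (0 : ℝ) 1) (φ : V) :
    ε * α * ‖φ‖ ^ 2 ≤ apar φ φ + ε * aperp φ φ := by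
  have h1 := mul_le_mul_of_nonneg_left (hcoer φ) hε.1.le
  have h2 := mul_nonneg (sub_nonneg.2 hε.2.le) (hapar.2.1 φ)
  nlinarith

lemma singular_perturbation_unique {V : Type*} [NormedAddCommGroup V] [InnerProductSpace ℝ V]
    {apar aperp : V →ₗ[ℝ] V →ₗ[ℝ] ℝ} (hapar : IsCSPForm apar)
    {α : ℝ} (hα : 0 < α) (hcoer : ∀ φ : V, α * ‖φ‖ ^ 2 ≤ apar φ φ + aperp φ φ)
    {ε : ℝ} (hε : ε ∈ Set.Ioo (0 : ℝ) 1) {ell : V →L[ℝ] ℝ} {φ φ' : V}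
    (h : ∀ ψ : V, apar φ ψ + ε * aperp φ ψ = ε * ell ψ)
    (h' : ∀ ψ : V, apar φ' ψ + ε * aperp φ' ψ = ε * ell ψ) : φ = φ' := by
  have h0 : apar (φ - φ') (φ - φ') + ε * aperp (φ - φ') (φ - φ') = 0 := by
    rw [map_sub apar, map_sub aperp, LinearMap.sub_apply, LinearMap.sub_apply]
    linarith [h (φ - φ'), h' (φ - φ')]
  have h1 := singular_perturbation_coercive hapar hcoer hε (φ - φ')
  rw [h0] at h1
  have h2 : ‖φ - φ'‖ ^ 2 ≤ 0 := nonpos_of_mul_nonpos_right h1 (mul_pos hε.1 hα)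
  have h3 : ‖φ - φ'‖ = 0 := pow_eq_zero_iff (two_ne_zero) |>.1 (le_antisymm h2 (sq_nonneg _))
  exact sub_eq_zero.1 (norm_eq_zero.1 h3)

lemma singular_perturbation_exists {V : Type*} [NormedAddCommGroup V] [InnerProductSpace ℝ V]
    [CompleteSpace V]
    {apar aperp : V →ₗ[ℝ] V →ₗ[ℝ] ℝ} (hapar : IsCSPForm apar) (haperp : IsCSPForm aperp)
    {α : ℝ} (hα : 0 < α) (hcoer : ∀ φ : V, α * ‖φ‖ ^ 2 ≤ apar φ φ + aperp φ φ)
    {ε : ℝ} (hε : ε ∈ Set.Ioo (0 : ℝ) 1) (ell : V →L[ℝ] ℝ) :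
    ∃ φ : V, ∀ ψ : V, apar φ ψ + ε * aperp φ ψ = ε * ell ψ := by
  obtain ⟨C₁, hC₁⟩ := hapar.2.2
  obtain ⟨C₂, hC₂⟩ := haperp.2.2
  let B : V →L[ℝ] V →L[ℝ] ℝ :=
    apar.mkContinuous₂ C₁ hC₁ + ε • aperp.mkContinuous₂ C₂ hC₂
  have hB : ∀ x y, B x y = apar x y + ε * aperp x y := fun x y => by simp [B]
  have hcoB : IsCoercive B := by
    refine ⟨ε * α, mul_pos hε.1 hα, fun u => ?_⟩
    rw [hB]
    linarith [singular_perturbation_coercive hapar hcoer hε u]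
  -- Riesz representative of the right-hand side `ε ℓ`.
  let f : V := (InnerProductSpace.toDual ℝ V).symm (ε • ell)
  refine ⟨hcoB.continuousLinearEquivOfBilin.symm f, fun ψ => ?_⟩
  rw [← hB, ← hcoB.continuousLinearEquivOfBilin_apply, ContinuousLinearEquiv.apply_symm_apply]
  exact InnerProductSpace.toDual_symm_apply

lemma ap_iff_singular_perturbation {V : Type*} [NormedAddCommGroup V] [InnerProductSpace ℝ V]
    {apar aperp c : V →ₗ[ℝ] V →ₗ[ℝ] ℝ} (hapar : IsCSPForm apar) {P : V →L[ℝ] V}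
    (hPG : ∀ φ : V, apar (P φ) (P φ) = 0)
    (hPA : ∀ φ : V, ∀ ψ : V, apar ψ ψ = 0 → c (φ - P φ) ψ = 0)
    {ell : V →L[ℝ] ℝ} {ε : ℝ} (hε : ε ∈ Set.Ioo (0 : ℝ) 1) {p q : V} (hp : apar p p = 0) :
    ((∀ η : V, apar η η = 0 → aperp p η + aperp q η = ell η) ∧
      (∀ ξ : V, (∀ ψ : V, apar ψ ψ = 0 → c ξ ψ = 0) →
        apar q ξ + ε * aperp q ξ + ε * aperp p ξ = ε * ell ξ)) ↔
    ∀ ψ : V, apar (p + q) ψ + ε * aperp (p + q) ψ = ε * ell ψ := by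
  have hp0 : ∀ ψ, apar p ψ = 0 := apar_eq_zero_of_null hapar hp
  have hG : ∀ η, apar η η = 0 → apar q η = 0 := fun η hη => by
    rw [hapar.1]; exact apar_eq_zero_of_null hapar hη q
  simp only [map_add, LinearMap.add_apply, hp0, zero_add]
  constructor
  · rintro ⟨h1, h2⟩ ψ
    have e1 := h1 (P ψ) (hPG ψ)
    have e2 := h2 (ψ - P ψ) (hPA ψ)
    simp only [map_sub, hG _ (hPG ψ)] at e2
    linear_combination e2 + ε * e1
  · intro h
    refine ⟨fun η hη => ?_, fun ξ _ => by linear_combination h ξ⟩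
    have := h η
    rw [hG η hη, zero_add] at this
    exact mul_left_cancel₀ hε.1.ne' this

/-- Theorem 2.1, part 1: for every ε ∈ (0,1) the AP formulation
admits a unique solution (p^ε,q^ε) ∈ G × A; moreover (p,q) ∈ G × A solves the
AP formulation iff φ := p + q is the unique solution of (P), p = Pφ and
q = φ − Pφ. -/
theorem AP_formulation_wellposed
    {V : Type*} [NormedAddCommGroup V] [InnerProductSpace ℝ V] [CompleteSpace V]
    (apar aperp c : V →ₗ[ℝ] V →ₗ[ℝ] ℝ)
    (hapar : IsCSPForm apar) (haperp : IsCSPForm aperp) (hc : IsCSPForm c)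
    (α : ℝ) (hα : 0 < α)
    (hcoer : ∀ φ : V, α * ‖φ‖ ^ 2 ≤ apar φ φ + aperp φ φ)
    -- Hypothesis B: bounded projection P onto G along A, V = G ⊕ A
    (P : V →L[ℝ] V)
    (hPG : ∀ φ : V, apar (P φ) (P φ) = 0)
    (hPA : ∀ φ : V, ∀ ψ : V, apar ψ ψ = 0 → c (φ - P φ) ψ = 0)
    (hPid : ∀ φ : V, apar φ φ = 0 → P φ = φ)
    (hPzero : ∀ φ : V, (∀ ψ : V, apar ψ ψ = 0 → c φ ψ = 0) → P φ = 0)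
    (ell : V →L[ℝ] ℝ) (F₀ : ℝ) (hF₀ : 0 ≤ F₀)
    (hell : ∀ ψ : V, |ell ψ| ≤ F₀ * Real.sqrt (c ψ ψ))
    (ε : ℝ) (hε : ε ∈ Set.Ioo (0 : ℝ) 1) :
    (∃! pq : V × V, apar pq.1 pq.1 = 0 ∧
      (∀ ψ : V, apar ψ ψ = 0 → c pq.2 ψ = 0) ∧
      (∀ η : V, apar η η = 0 → aperp pq.1 η + aperp pq.2 η = ell η) ∧
      (∀ ξ : V, (∀ ψ : V, apar ψ ψ = 0 → c ξ ψ = 0) →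
        apar pq.2 ξ + ε * aperp pq.2 ξ + ε * aperp pq.1 ξ = ε * ell ξ)) ∧
    (∀ p q : V, apar p p = 0 → (∀ ψ : V, apar ψ ψ = 0 → c q ψ = 0) →
      (((∀ η : V, apar η η = 0 → aperp p η + aperp q η = ell η) ∧
        (∀ ξ : V, (∀ ψ : V, apar ψ ψ = 0 → c ξ ψ = 0) →
          apar q ξ + ε * aperp q ξ + ε * aperp p ξ = ε * ell ξ))
       ↔ ((∀ ψ : V, apar (p + q) ψ + ε * aperp (p + q) ψ = ε * ell ψ) ∧
          (∀ φ : V, (∀ ψ : V, apar φ ψ + ε * aperp φ ψ = ε * ell ψ) → φ = p + q) ∧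
          p = P (p + q) ∧ q = (p + q) - P (p + q)))) := by
  have hiff := fun (p q : V) (hp : apar p p = 0) =>
    ap_iff_singular_perturbation (aperp := aperp) (ell := ell) (q := q) hapar hPG hPA hε hp
  have huniq := fun (φ φ' : V) => singular_perturbation_unique (ell := ell) (φ := φ) (φ' := φ')
    hapar hα hcoer hε
  have hproj : ∀ p q : V, apar p p = 0 → (∀ ψ : V, apar ψ ψ = 0 → c q ψ = 0) →
      P (p + q) = p := fun p q hp hq => by
    rw [map_add, hPid p hp, hPzero q hq, add_zero]
  constructor
  · obtain ⟨φ, hφ⟩ := singular_perturbation_exists hapar haperp hα hcoer hε ell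
    refine ⟨(P φ, φ - P φ), ⟨hPG φ, hPA φ, (hiff _ _ (hPG φ)).2 ?_⟩, ?_⟩
    · simpa only [add_sub_cancel] using hφ
    · rintro ⟨p, q⟩ ⟨hp, hq, hAP⟩
      have hsum : φ = p + q := huniq _ _ hφ ((hiff p q hp).1 hAP)
      rw [hsum, hproj p q hp hq, add_sub_cancel_left]
  · intro p q hp hq
    rw [hiff p q hp, hproj p q hp hq, add_sub_cancel_left]
    exact ⟨fun h => ⟨h, fun φ hφ => huniq _ _ hφ h, rfl, rfl⟩, fun h => h.1⟩
end

section
/- (Energy identity, equation (aa1).) Let ε ∈ (0,1), let (p^ε,q^ε) ∈ G × A be the solution of the AP formulation, let φ⁰ ∈ G be the unique solution of the Limit problem (L), and set e^ε := p^ε − φ⁰. Then (1/ε) a∥(q^ε,q^ε) + a⊥(q^ε + e^ε, q^ε + e^ε) = ℓ(q^ε) − a⊥(φ⁰, q^ε). -/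
/-- energy identity, equation (aa1): with (p^ε,q^ε) the AP
solution, φ⁰ the limit solution and e^ε = p^ε − φ⁰, one has
(1/ε)a∥(q^ε,q^ε) + a⊥(q^ε+e^ε, q^ε+e^ε) = ℓ(q^ε) − a⊥(φ⁰,q^ε). -/
theorem energy_identity
    {V : Type*} [NormedAddCommGroup V] [InnerProductSpace ℝ V] [CompleteSpace V]
    (apar aperp c : V →ₗ[ℝ] V →ₗ[ℝ] ℝ)
    (hapar : IsCSPForm apar) (haperp : IsCSPForm aperp) (hc : IsCSPForm c)
    (α : ℝ) (hα : 0 < α)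
    (hcoer : ∀ φ : V, α * ‖φ‖ ^ 2 ≤ apar φ φ + aperp φ φ)
    -- Hypothesis B: bounded projection P onto G along A, V = G ⊕ A
    (P : V →L[ℝ] V)
    (hPG : ∀ φ : V, apar (P φ) (P φ) = 0)
    (hPA : ∀ φ : V, ∀ ψ : V, apar ψ ψ = 0 → c (φ - P φ) ψ = 0)
    (hPid : ∀ φ : V, apar φ φ = 0 → P φ = φ)
    (hPzero : ∀ φ : V, (∀ ψ : V, apar ψ ψ = 0 → c φ ψ = 0) → P φ = 0)
    (ell : V →L[ℝ] ℝ) (F₀ : ℝ) (hF₀ : 0 ≤ F₀)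
    (hell : ∀ ψ : V, |ell ψ| ≤ F₀ * Real.sqrt (c ψ ψ))
    (ε : ℝ) (hε : ε ∈ Set.Ioo (0 : ℝ) 1)
    -- (p,q) ∈ G × A is the solution of the AP formulation
    (p q : V) (hpG : apar p p = 0)
    (hqA : ∀ ψ : V, apar ψ ψ = 0 → c q ψ = 0)
    (hAP1 : ∀ η : V, apar η η = 0 → aperp p η + aperp q η = ell η)
    (hAP2 : ∀ ξ : V, (∀ ψ : V, apar ψ ψ = 0 → c ξ ψ = 0) →
      apar q ξ + ε * aperp q ξ + ε * aperp p ξ = ε * ell ξ)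
    -- φ⁰ ∈ G is the unique solution of the Limit problem (L)
    (φ₀ : V) (hφ₀G : apar φ₀ φ₀ = 0)
    (hφ₀ : ∀ ψ : V, apar ψ ψ = 0 → aperp φ₀ ψ = ell ψ)
    (hφ₀uniq : ∀ φ' : V, apar φ' φ' = 0 →
      (∀ ψ : V, apar ψ ψ = 0 → aperp φ' ψ = ell ψ) → φ' = φ₀) :
    (1 / ε) * apar q q + aperp (q + (p - φ₀)) (q + (p - φ₀))
      = ell q - aperp φ₀ q := by
  have hq : (1 / ε) * apar q q + aperp q q + aperp p q = ell q := by
    have hε0 : ε ≠ 0 := hε.1.ne'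
    have h := hAP2 q hqA
    field_simp
    linarith
  -- Galerkin orthogonality of `q + (p - φ₀)` to `p` and to `φ₀`, both elements of `G`.
  have h1 := hAP1 p hpG
  have h2 := hφ₀ p hpG
  have h3 := hAP1 φ₀ hφ₀G
  have h4 := hφ₀ φ₀ hφ₀G
  simp only [map_add, map_sub, LinearMap.add_apply, LinearMap.sub_apply]
  linarith
end

section
/- (Theorem 2.1, part 3: strong convergence.) Let φ^ε denote the unique solution of (P) for ε ∈ (0,1), p^ε := Pφ^ε, q^ε := φ^ε − Pφ^ε, and let φ⁰ ∈ G be the unique solution of the Limit problem (L). Then φ^ε → φ⁰, p^ε → φ⁰ and q^ε → 0 strongly in V as ε → 0 (i.e. ‖φ^ε − φ⁰‖ → 0, ‖p^ε − φ⁰‖ → 0 and ‖q^ε‖ → 0). -/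
/-!
The error `e = Φ ε - φ₀` satisfies `apar e ψ + ε * aperp e ψ = ε * r ψ` for all `ψ`, where the
residual `r = ell - aperp φ₀` is continuous and vanishes on the kernel `G` of `apar`, because `φ₀`
solves the limit problem. Hence `r` lies in the closure of the functionals `apar w`
(`exists_form_approx`, from `Kᗮᗮ = closure K` and the Riesz representation): for every `δ > 0` there
is `w` with `|r ψ - apar w ψ| ≤ δ * ‖ψ‖`. Testing the error equation with `e` and absorbing
`ε * apar w e` into the left-hand side by Young's inequality gives, for `ε ≤ 1 / 2`,
`α * ‖e‖ ^ 2 ≤ δ * ‖e‖ + ε / 2 * apar w w`, so `e → 0` (`norm_lt_of_energy`). No weak compactness is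
needed. The statements on `P (Φ ε)` and `Φ ε - P (Φ ε)` follow from `P (Φ ε) - φ₀ = P e` and the
continuity of `P`.
-/

open Filter

/-- A continuous functional vanishing on the kernel of a continuous symmetric positive semidefinite
form `a` is a norm limit of functionals `a w`. -/
lemma exists_form_approx {V : Type*} [NormedAddCommGroup V] [InnerProductSpace ℝ V]
    [CompleteSpace V] {a : V →ₗ[ℝ] V →ₗ[ℝ] ℝ} (ha : IsCSPForm a) (r : V →L[ℝ] ℝ)
    (hr : ∀ ψ, a ψ ψ = 0 → r ψ = 0) {δ : ℝ} (hδ : 0 < δ) :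
    ∃ w, ∀ ψ, |r ψ - a w ψ| ≤ δ * ‖ψ‖ := by
  obtain ⟨-, -, C, hC⟩ := ha
  let B : V →L[ℝ] V →L[ℝ] ℝ := LinearMap.mkContinuous₂ a C hC
  let A : V →L[ℝ] V := InnerProductSpace.continuousLinearMapOfBilin (𝕜 := ℝ) B
  have hA : ∀ x y, inner ℝ (A x) y = a x y := fun x y =>
    InnerProductSpace.continuousLinearMapOfBilin_apply (𝕜 := ℝ) B x y
  let v : V := (InnerProductSpace.toDual ℝ V).symm r
  have hv : ∀ y, inner ℝ v y = r y := fun y => InnerProductSpace.toDual_symm_apply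
  -- An element orthogonal to the range of `A` is in particular orthogonal to its own image.
  have hmem : v ∈ (LinearMap.range (A : V →ₗ[ℝ] V))ᗮᗮ := by
    rw [Submodule.mem_orthogonal']
    intro x hx
    rw [hv]
    apply hr
    rw [← hA]
    exact (Submodule.mem_orthogonal _ _).1 hx _ ⟨x, rfl⟩
  rw [Submodule.orthogonal_orthogonal_eq_closure, ← SetLike.mem_coe,
    Submodule.topologicalClosure_coe, Metric.mem_closure_iff] at hmem
  obtain ⟨_, ⟨w, rfl⟩, hw⟩ := hmem δ hδ
  refine ⟨w, fun ψ => ?_⟩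
  rw [← hv, ← hA, ← inner_sub_left]
  refine (abs_real_inner_le_norm _ _).trans ?_
  rw [dist_eq_norm] at hw
  exact mul_le_mul_of_nonneg_right hw.le (norm_nonneg _)

/-- The energy inequality forces `n < η` once `δ = α * η / 2` and `ε * M` is small. -/
lemma norm_lt_of_energy {α n η ε M : ℝ} (hα : 0 < α) (hη : 0 < η)
    (h : α * n ^ 2 ≤ α * η / 2 * n + ε / 2 * M) (hM : ε * M < α * η ^ 2) : n < η := by
  by_contra! hn
  have h1 : α * η ^ 2 ≤ α * (n * (2 * n - η)) :=
    mul_le_mul_of_nonneg_left (by nlinarith) hα.le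
  nlinarith

/-- Theorem 2.1, part 3: strong convergence φ^ε → φ⁰,
p^ε = Pφ^ε → φ⁰ and q^ε = φ^ε − Pφ^ε → 0 in V as ε → 0. -/
theorem strong_convergence_to_limit
    {V : Type*} [NormedAddCommGroup V] [InnerProductSpace ℝ V] [CompleteSpace V]
    (apar aperp c : V →ₗ[ℝ] V →ₗ[ℝ] ℝ)
    (hapar : IsCSPForm apar) (haperp : IsCSPForm aperp) (hc : IsCSPForm c)
    (α : ℝ) (hα : 0 < α)
    (hcoer : ∀ φ : V, α * ‖φ‖ ^ 2 ≤ apar φ φ + aperp φ φ)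
    -- Hypothesis B: bounded projection P onto G along A, V = G ⊕ A
    (P : V →L[ℝ] V)
    (hPG : ∀ φ : V, apar (P φ) (P φ) = 0)
    (hPA : ∀ φ : V, ∀ ψ : V, apar ψ ψ = 0 → c (φ - P φ) ψ = 0)
    (hPid : ∀ φ : V, apar φ φ = 0 → P φ = φ)
    (hPzero : ∀ φ : V, (∀ ψ : V, apar ψ ψ = 0 → c φ ψ = 0) → P φ = 0)
    -- Poincaré–Wirtinger inequality on A
    (CW : ℝ) (hCW : 0 < CW)
    (hPW : ∀ q : V, (∀ ψ : V, apar ψ ψ = 0 → c q ψ = 0) →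
      c q q ≤ CW ^ 2 * apar q q)
    (ell : V →L[ℝ] ℝ) (F₀ : ℝ) (hF₀ : 0 ≤ F₀)
    (hell : ∀ ψ : V, |ell ψ| ≤ F₀ * Real.sqrt (c ψ ψ))
    -- Φ ε is the (unique) solution of (P) for each ε ∈ (0,1)
    (Φ : ℝ → V)
    (hΦ : ∀ ε ∈ Set.Ioo (0 : ℝ) 1, ∀ ψ : V,
      apar (Φ ε) ψ + ε * aperp (Φ ε) ψ = ε * ell ψ)
    -- φ⁰ ∈ G is the unique solution of the Limit problem (L)
    (φ₀ : V) (hφ₀G : apar φ₀ φ₀ = 0)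
    (hφ₀ : ∀ ψ : V, apar ψ ψ = 0 → aperp φ₀ ψ = ell ψ)
    (hφ₀uniq : ∀ φ' : V, apar φ' φ' = 0 →
      (∀ ψ : V, apar ψ ψ = 0 → aperp φ' ψ = ell ψ) → φ' = φ₀) :
    Tendsto (fun ε : ℝ => ‖Φ ε - φ₀‖) (nhdsWithin 0 (Set.Ioo 0 1)) (nhds 0) ∧
    Tendsto (fun ε : ℝ => ‖P (Φ ε) - φ₀‖) (nhdsWithin 0 (Set.Ioo 0 1)) (nhds 0) ∧
    Tendsto (fun ε : ℝ => ‖Φ ε - P (Φ ε)‖) (nhdsWithin 0 (Set.Ioo 0 1)) (nhds 0) := by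
  have herr : Tendsto (fun ε : ℝ => Φ ε - φ₀) (nhdsWithin 0 (Set.Ioo 0 1)) (nhds 0) := by
    obtain ⟨hsymm, hpos, -⟩ := id hapar
    obtain ⟨-, hpos', D, hD⟩ := id haperp
    -- `φ₀` is in the radical of `apar`, by Cauchy-Schwarz.
    have hrad : ∀ ψ, apar φ₀ ψ = 0 := by
      intro ψ
      by_contra hne
      have h := hpos (ψ - ((apar ψ ψ + 1) / (2 * apar φ₀ ψ)) • φ₀)
      simp only [map_sub, map_smul, LinearMap.sub_apply, LinearMap.smul_apply, smul_eq_mul,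
        hφ₀G, hsymm ψ φ₀] at h
      have h2 : (apar ψ ψ + 1) / (2 * apar φ₀ ψ) * apar φ₀ ψ = (apar ψ ψ + 1) / 2 := by
        field_simp
      linarith
    let r : V →L[ℝ] ℝ := ell - (aperp φ₀).mkContinuous (D * ‖φ₀‖) (hD φ₀)
    have hr : ∀ ψ, r ψ = ell ψ - aperp φ₀ ψ := fun ψ => rfl
    rw [Metric.tendsto_nhds]
    intro η hη
    obtain ⟨w, hw⟩ := exists_form_approx hapar r
      (fun ψ hψ => by rw [hr, hφ₀ ψ hψ, sub_self]) (show 0 < α * η / 2 by positivity)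
    have hlim : Tendsto (fun ε : ℝ => ε * apar w w) (nhdsWithin 0 (Set.Ioo 0 1)) (nhds 0) := by
      have : Tendsto (fun ε : ℝ => ε * apar w w) (nhds 0) (nhds (0 * apar w w)) :=
        tendsto_id.mul_const _
      rw [zero_mul] at this
      exact this.mono_left nhdsWithin_le_nhds
    filter_upwards [hlim.eventually_lt_const (show 0 < α * η ^ 2 by positivity),
      self_mem_nhdsWithin,
      nhdsWithin_le_nhds (Iio_mem_nhds (show (0 : ℝ) < 1 / 2 by norm_num))] with ε hε hmem hhalf
    have hε0 : 0 < ε := hmem.1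
    have hhalf' : ε < 1 / 2 := hhalf
    rw [dist_zero_right]
    refine norm_lt_of_energy hα hη ?_ hε
    have heq := hΦ ε hmem (Φ ε - φ₀)
    obtain ⟨e, he⟩ : ∃ e, e = Φ ε - φ₀ := ⟨_, rfl⟩
    have hΦe : Φ ε = φ₀ + e := by rw [he]; abel
    rw [← he] at heq ⊢
    rw [hΦe, map_add, map_add, LinearMap.add_apply, LinearMap.add_apply, hrad, zero_add] at heq
    have hbd := (abs_le.1 (hw e)).2
    rw [hr] at hbd
    have hyoung : 0 ≤ ε ^ 2 * apar w w - 2 * (ε * apar w e) + apar e e := by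
      have h := hpos (ε • w - e)
      simp only [map_sub, map_smul, LinearMap.sub_apply, LinearMap.smul_apply, smul_eq_mul,
        hsymm e w] at h
      linarith
    have hbd' := mul_le_mul_of_nonneg_left hbd hε0.le
    have hee : ε * apar e e ≤ 1 / 2 * apar e e :=
      mul_le_mul_of_nonneg_right hhalf'.le (hpos e)
    have hco := mul_le_mul_of_nonneg_left (hcoer e) hε0.le
    refine le_of_mul_le_mul_left ?_ hε0
    linarith
  have hP : Tendsto (fun ε : ℝ => P (Φ ε) - φ₀) (nhdsWithin 0 (Set.Ioo 0 1)) (nhds 0) := by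
    have h := (P.continuous.tendsto 0).comp herr
    simpa only [Function.comp_def, map_sub, hPid φ₀ hφ₀G, map_zero] using h
  refine ⟨by simpa using herr.norm, by simpa using hP.norm, ?_⟩
  simpa using (herr.sub hP).norm
end

section
/- (Proposition 2.4, uniform bound on the Lagrange multiplier.) Let φ⁰ ∈ G be the unique solution of the Limit problem (L), and suppose there is a constant K ≥ 0 such that |ℓ(q) − a⊥(φ⁰, q)| ≤ K √(a∥(q,q)) for all q ∈ A (in the paper this holds with K = C·max(‖f‖_{L²}, ‖φ⁰‖_{H²}) when φ⁰ ∈ H²(Ω)). Then for every ε ∈ (0,1): a∥(q^ε, q^ε) ≤ ε² K², where (p^ε,q^ε) is the solution of the AP formulation; consequently, if λ^ε ∈ L satisfies ã(η, λ^ε) = (1/ε) ã(ι q^ε, η) for all η ∈ Ṽ (the Lagrange multiplier of the full AP system), then ã(λ^ε, λ^ε) ≤ K², a bound independent of ε. -/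
/-- Proposition 2.4, uniform bound on the Lagrange multiplier:
if |ℓ(q) − a⊥(φ⁰,q)| ≤ K √(a∥(q,q)) on A, then for every ε ∈ (0,1) the AP
solution satisfies a∥(q^ε,q^ε) ≤ ε²K², and any Lagrange multiplier λ^ε ∈ L
with ã(η,λ^ε) = (1/ε)ã(ι q^ε, η) for all η satisfies ã(λ^ε,λ^ε) ≤ K². -/
theorem lagrange_multiplier_uniform_bound
    {V : Type*} [NormedAddCommGroup V] [InnerProductSpace ℝ V] [CompleteSpace V]
    {W : Type*} [NormedAddCommGroup W] [InnerProductSpace ℝ W] [CompleteSpace W]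
    (apar aperp c : V →ₗ[ℝ] V →ₗ[ℝ] ℝ)
    (hapar : IsCSPForm apar) (haperp : IsCSPForm aperp) (hc : IsCSPForm c)
    (α : ℝ) (hα : 0 < α)
    (hcoer : ∀ φ : V, α * ‖φ‖ ^ 2 ≤ apar φ φ + aperp φ φ)
    -- Hypothesis B: bounded projection P onto G along A, V = G ⊕ A
    (P : V →L[ℝ] V)
    (hPG : ∀ φ : V, apar (P φ) (P φ) = 0)
    (hPA : ∀ φ : V, ∀ ψ : V, apar ψ ψ = 0 → c (φ - P φ) ψ = 0)
    (hPid : ∀ φ : V, apar φ φ = 0 → P φ = φ)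
    (hPzero : ∀ φ : V, (∀ ψ : V, apar ψ ψ = 0 → c φ ψ = 0) → P φ = 0)
    (ell : V →L[ℝ] ℝ) (F₀ : ℝ) (hF₀ : 0 ≤ F₀)
    (hell : ∀ ψ : V, |ell ψ| ≤ F₀ * Real.sqrt (c ψ ψ))
    -- Embedding into Ṽ = W
    (ta : W →ₗ[ℝ] W →ₗ[ℝ] ℝ) (hta : IsCSPForm ta)
    (L : Submodule ℝ W) (hLclosed : IsClosed (L : Set W))
    (ι : V →L[ℝ] W) (hι : Function.Injective ι)
    (hιa : ∀ φ ψ : V, ta (ι φ) (ι ψ) = apar φ ψ)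
    -- φ⁰ ∈ G is the unique solution of the Limit problem (L)
    (φ₀ : V) (hφ₀G : apar φ₀ φ₀ = 0)
    (hφ₀ : ∀ ψ : V, apar ψ ψ = 0 → aperp φ₀ ψ = ell ψ)
    (hφ₀uniq : ∀ φ' : V, apar φ' φ' = 0 →
      (∀ ψ : V, apar ψ ψ = 0 → aperp φ' ψ = ell ψ) → φ' = φ₀)
    -- the key estimate (valid e.g. when φ⁰ ∈ H²(Ω))
    (K : ℝ) (hK : 0 ≤ K)
    (hKest : ∀ q : V, (∀ ψ : V, apar ψ ψ = 0 → c q ψ = 0) →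
      |ell q - aperp φ₀ q| ≤ K * Real.sqrt (apar q q)) :
    ∀ ε ∈ Set.Ioo (0 : ℝ) 1, ∀ p q : V, apar p p = 0 →
      (∀ ψ : V, apar ψ ψ = 0 → c q ψ = 0) →
      (∀ η : V, apar η η = 0 → aperp p η + aperp q η = ell η) →
      (∀ ξ : V, (∀ ψ : V, apar ψ ψ = 0 → c ξ ψ = 0) →
        apar q ξ + ε * aperp q ξ + ε * aperp p ξ = ε * ell ξ) →
      apar q q ≤ ε ^ 2 * K ^ 2 ∧
      ∀ lam : W, lam ∈ L → (∀ η : W, ta η lam = (1 / ε) * ta (ι q) η) →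
        ta lam lam ≤ K ^ 2 := by
  rintro ε ⟨hε0, -⟩ p q hp hq h1 h2
  obtain ⟨hsym, hpos, -⟩ := haperp
  have hqq := h2 q hq
  have hE := hpos (p - φ₀ + q)
  simp only [map_add, map_sub, LinearMap.add_apply, LinearMap.sub_apply] at hE
  -- Testing the first equation with `p` and `φ₀` separately amounts to testing it with `p - φ₀`.
  have e1 := h1 p hp
  have e2 := h1 φ₀ hφ₀G
  have e3 := hφ₀ p hp
  have e4 := hφ₀ φ₀ hφ₀G
  have s1 := hsym p q
  have s2 := hsym φ₀ q
  have s3 := hsym φ₀ p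
  have key : apar q q ≤ ε * (ell q - aperp φ₀ q) := by
    have hle : 0 ≤ aperp q q + aperp p q - aperp φ₀ q := by linarith
    have := mul_nonneg hε0.le hle
    linarith
  have hs0 : 0 ≤ √(apar q q) := Real.sqrt_nonneg _
  have hs2 : √(apar q q) ^ 2 = apar q q := Real.sq_sqrt (hapar.2.1 q)
  have hs : √(apar q q) ^ 2 ≤ ε * (K * √(apar q q)) := by
    rw [hs2]
    exact key.trans
      (mul_le_mul_of_nonneg_left ((le_abs_self _).trans (hKest q hq)) hε0.le)
  have hsle : √(apar q q) ≤ ε * K := by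
    by_contra! hlt
    nlinarith [mul_nonneg hε0.le hK]
  have hbound : apar q q ≤ ε ^ 2 * K ^ 2 := by
    rw [← hs2, ← mul_pow]
    exact pow_le_pow_left₀ hs0 hsle 2
  refine ⟨hbound, fun lam _ hlam => ?_⟩
  have hlam2 : ta lam lam = apar q q / ε ^ 2 := by
    rw [hlam lam, hlam (ι q), hιa]
    field_simp
  rw [hlam2, div_le_iff₀ (by positivity)]
  linarith
end

section
/- (Weighted one-dimensional Poincaré inequality, Appendix A, inequality (uine).) Let 0 < m ≤ M, let J : [0,1] → ℝ be continuously differentiable with m ≤ J(t) ≤ M for all t ∈ [0,1], and let u : [0,1] → ℝ be continuously differentiable with ∫₀¹ u(t) dt = 0. Then ∫₀¹ u(t)²/J(t) dt ≤ (M/m) ∫₀¹ ( u'(t)/J(t) − u(t) J'(t)/J(t)² )² J(t) dt. -/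
/-!
Put `q = u / J`, so that `q' = u' / J - u J' / J ^ 2` and `∫ q J = 0`. Subtracting the constant
`c = q 0` can only increase the weighted `L²` norm of `q`, because `q` has zero weighted mean:
pointwise `q² J ≤ (q - c)² J + 2 c u`, and the last term integrates to zero. By Cauchy–Schwarz
(`sq_sub_le_integral_sq_deriv`) `(q t - q 0)² ≤ ∫ q'²` for every `t ∈ [0, 1]`, whence
`∫ q² J ≤ M ∫ q'² ≤ (M / m) ∫ q'² J`.
-/

open Set in
/-- Cauchy–Schwarz for the increment of a `C¹` function on `[0, 1]`. -/
lemma sq_sub_le_integral_sq_deriv (q q' : ℝ → ℝ)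
    (hq : ∀ t ∈ Icc (0 : ℝ) 1, HasDerivAt q (q' t) t)
    (hq' : ContinuousOn q' (Icc (0 : ℝ) 1)) {t : ℝ} (ht : t ∈ Icc (0 : ℝ) 1) :
    (q t - q 0) ^ 2 ≤ ∫ s in (0 : ℝ)..1, q' s ^ 2 := by
  have hsub : Icc (0 : ℝ) t ⊆ Icc 0 1 := Icc_subset_Icc_right ht.2
  have hc : ContinuousOn q' (uIcc 0 t) := by
    rw [uIcc_of_le ht.1]; exact hq'.mono hsub
  have hftc : ∫ s in (0 : ℝ)..t, q' s = q t - q 0 :=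
    intervalIntegral.integral_eq_sub_of_hasDerivAt
      (fun s hs => hq s (hsub (by rwa [uIcc_of_le ht.1] at hs))) hc.intervalIntegrable
  set d := q t - q 0 with hd
  -- Integrating `(q' - d)² ≥ 0` over `[0, t]` gives `∫ q'² ≥ (2 - t) d²`, and `2 - t ≥ 1`.
  have hmono : ∫ s in (0 : ℝ)..t, (2 * d * q' s - d ^ 2) ≤ ∫ s in (0 : ℝ)..t, q' s ^ 2 := by
    apply intervalIntegral.integral_mono_on ht.1
    · exact ContinuousOn.intervalIntegrable (by fun_prop)
    · exact (hc.pow 2).intervalIntegrable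
    · intro s _
      nlinarith [sq_nonneg (q' s - d)]
  have hlow : ∫ s in (0 : ℝ)..t, (2 * d * q' s - d ^ 2) = 2 * d * d - t * d ^ 2 := by
    rw [intervalIntegral.integral_sub (hc.intervalIntegrable.const_mul _) (by simp),
      intervalIntegral.integral_const_mul, hftc]
    simp
  have hext : ∫ s in (0 : ℝ)..t, q' s ^ 2 ≤ ∫ s in (0 : ℝ)..1, q' s ^ 2 := by
    apply intervalIntegral.integral_mono_interval le_rfl ht.1 ht.2
    · exact Filter.Eventually.of_forall fun s => sq_nonneg _
    · exact ContinuousOn.intervalIntegrable (by rw [uIcc_of_le zero_le_one]; exact hq'.pow 2)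
  nlinarith [mul_nonneg (sub_nonneg.2 ht.2) (sq_nonneg d)]

/-- weighted one-dimensional Poincaré inequality, Appendix A,
inequality (uine): for 0 < m ≤ J ≤ M on [0,1], J, u ∈ C¹([0,1]) and
∫₀¹ u = 0, one has
∫₀¹ u²/J ≤ (M/m) ∫₀¹ (u'/J − u J'/J²)² J. -/
theorem weighted_poincare_inequality
    (m M : ℝ) (hm : 0 < m) (hmM : m ≤ M)
    (J J' u u' : ℝ → ℝ)
    (hJderiv : ∀ t ∈ Set.Icc (0 : ℝ) 1, HasDerivAt J (J' t) t)
    (hJ'cont : ContinuousOn J' (Set.Icc (0 : ℝ) 1))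
    (huderiv : ∀ t ∈ Set.Icc (0 : ℝ) 1, HasDerivAt u (u' t) t)
    (hu'cont : ContinuousOn u' (Set.Icc (0 : ℝ) 1))
    (hJm : ∀ t ∈ Set.Icc (0 : ℝ) 1, m ≤ J t)
    (hJM : ∀ t ∈ Set.Icc (0 : ℝ) 1, J t ≤ M)
    (hmean : ∫ t in (0 : ℝ)..1, u t = 0) :
    ∫ t in (0 : ℝ)..1, u t ^ 2 / J t
      ≤ (M / m) * ∫ t in (0 : ℝ)..1,
          (u' t / J t - u t * J' t / J t ^ 2) ^ 2 * J t := by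
  have hI : Set.uIcc (0 : ℝ) 1 = Set.Icc 0 1 := Set.uIcc_of_le zero_le_one
  have hJ0 : ∀ t ∈ Set.Icc (0 : ℝ) 1, 0 < J t := fun t ht => hm.trans_le (hJm t ht)
  have hJne : ∀ t ∈ Set.Icc (0 : ℝ) 1, J t ≠ 0 := fun t ht => (hJ0 t ht).ne'
  have hJc : ContinuousOn J (Set.Icc 0 1) := fun t ht =>
    (hJderiv t ht).continuousAt.continuousWithinAt
  have huc : ContinuousOn u (Set.Icc 0 1) := fun t ht =>
    (huderiv t ht).continuousAt.continuousWithinAt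
  set p : ℝ → ℝ := fun t => u' t / J t - u t * J' t / J t ^ 2 with hp
  have hpc : ContinuousOn p (Set.Icc 0 1) :=
    (hu'cont.div hJc hJne).sub
      ((huc.mul hJ'cont).div (hJc.pow 2) fun t ht => pow_ne_zero 2 (hJne t ht))
  have hq : ∀ t ∈ Set.Icc (0 : ℝ) 1, HasDerivAt (fun s => u s / J s) (p t) t := by
    intro t ht
    refine ((huderiv t ht).div (hJderiv t ht) (hJne t ht)).congr_deriv ?_
    have := hJne t ht
    simp only [hp]
    field_simp
  set D := ∫ s in (0 : ℝ)..1, p s ^ 2 with hD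
  set c := u 0 / J 0 with hc
  have hM : 0 < M := hm.trans_le hmM
  have hu_int : IntervalIntegrable u MeasureTheory.volume 0 1 :=
    ContinuousOn.intervalIntegrable (by rwa [hI])
  have hupper : ∫ t in (0 : ℝ)..1, u t ^ 2 / J t ≤ ∫ t in (0 : ℝ)..1, (M * D + 2 * c * u t) := by
    apply intervalIntegral.integral_mono_on zero_le_one
    · exact ContinuousOn.intervalIntegrable (by rw [hI]; exact (huc.pow 2).div hJc hJne)
    · exact intervalIntegrable_const.add (hu_int.const_mul _)
    · intro t ht
      have hinc : (u t / J t - c) ^ 2 ≤ D := sq_sub_le_integral_sq_deriv _ p hq hpc ht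
      have hexp : u t ^ 2 / J t = (u t / J t - c) ^ 2 * J t + 2 * c * u t - c ^ 2 * J t := by
        have := hJne t ht
        field_simp
        ring
      have hbd : (u t / J t - c) ^ 2 * J t ≤ D * M :=
        mul_le_mul hinc (hJM t ht) (hJ0 t ht).le ((sq_nonneg _).trans hinc)
      have := mul_nonneg (sq_nonneg c) (hJ0 t ht).le
      linarith
  have hconst : ∫ t in (0 : ℝ)..1, (M * D + 2 * c * u t) = M * D := by
    rw [intervalIntegral.integral_add intervalIntegrable_const (hu_int.const_mul _),
      intervalIntegral.integral_const_mul (2 * c), hmean]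
    simp
  have hweight : m * D ≤ ∫ t in (0 : ℝ)..1, p t ^ 2 * J t := by
    rw [hD, ← intervalIntegral.integral_const_mul]
    apply intervalIntegral.integral_mono_on zero_le_one
    · exact ContinuousOn.intervalIntegrable (by rw [hI]; exact (hpc.pow 2).const_mul m)
    · exact ContinuousOn.intervalIntegrable (by rw [hI]; exact (hpc.pow 2).mul hJc)
    · intro t ht
      nlinarith [mul_le_mul_of_nonneg_left (hJm t ht) (sq_nonneg (p t))]
  calc ∫ t in (0 : ℝ)..1, u t ^ 2 / J t ≤ M * D := hupper.trans_eq hconst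
    _ = M / m * (m * D) := by field_simp
    _ ≤ _ := mul_le_mul_of_nonneg_left hweight (div_pos hM hm).le
end

section
/- (Appendix B Claim.) Let n ≥ 2 and m ≥ 2 be integers, let M be an invertible n × n real matrix and K an arbitrary m × m real matrix. On the space W = ℝ^{n×m} of coefficient matrices define the bilinear form B(λ, p) = Σ_{i,k=1}^{n} Σ_{j,l=1}^{m} λ_{ij} M_{ik} K_{jl} p_{kl}. Let V_h := {p ∈ W : p_{1,l} = 0 and p_{n,l} = 0 for all l = 1,…,m} and L_h := {λ ∈ W : λ_{i,1} = 0 for all i = 1,…,n}. Then the subspace N := {λ ∈ L_h : B(λ, p) = 0 for all p ∈ V_h} has dimension at least 2(m−1); in particular N ≠ {0}. (Explicitly, the matrices a ⊗ e_j and a' ⊗ e_j for j = 2,…,m, where M a = e₁ and M a' = e_n with e₁, e_n, e_j standard basis vectors, are 2(m−1) linearly independent elements of N.) -/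
/-!
The form factors as `B(λ, p) = ∑ (Mᵀ λ)_{kj} K_{jl} p_{kl}`, so it only sees `Mᵀ λ`. If `Mᵀ λ` is
supported on the first and last rows, where every `p ∈ V_h` vanishes, then `B(λ, p) = 0`. Since
`Mᵀ` is invertible, `λ = (Mᵀ)⁻¹ E_{rj}` realises every matrix unit `E_{rj}` with `r` one of the two
boundary rows, and such a `λ` has only its `j`-th column nonzero, so it lies in `L_h` as soon as
`j` is not the first column. These `2(m-1)` matrices are linearly independent because left
multiplication by `Mᵀ` sends them to distinct matrix units.
-/

/-- The form `B` depends on `lam` only through `Mᵀ * lam`. -/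
lemma parallel_form_eq {n m : ℕ} (M : Matrix (Fin n) (Fin n) ℝ) (K : Matrix (Fin m) (Fin m) ℝ)
    (lam p : Matrix (Fin n) (Fin m) ℝ) :
    (∑ i : Fin n, ∑ k : Fin n, ∑ j : Fin m, ∑ l : Fin m, lam i j * M i k * K j l * p k l) =
      ∑ k : Fin n, ∑ j : Fin m, ∑ l : Fin m, (M.transpose * lam) k j * K j l * p k l := by
  rw [Finset.sum_comm]
  refine Finset.sum_congr rfl fun k _ => ?_
  rw [Finset.sum_comm]
  refine Finset.sum_congr rfl fun j _ => ?_
  rw [Finset.sum_comm]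
  refine Finset.sum_congr rfl fun l _ => ?_
  simp only [Matrix.mul_apply, Matrix.transpose_apply, Finset.sum_mul]
  exact Finset.sum_congr rfl fun i _ => by ring

/-- If `Mᵀ * lam` is a matrix unit in row `r`, then `B(lam, ·)` vanishes on every `p` whose row `r`
is zero. -/
lemma parallel_form_eq_zero {n m : ℕ} (M : Matrix (Fin n) (Fin n) ℝ)
    (K : Matrix (Fin m) (Fin m) ℝ) (lam p : Matrix (Fin n) (Fin m) ℝ) (r : Fin n) (c : Fin m)
    (h : M.transpose * lam = Matrix.single r c 1) (hp : ∀ l, p r l = 0) :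
    (∑ i : Fin n, ∑ k : Fin n, ∑ j : Fin m, ∑ l : Fin m, lam i j * M i k * K j l * p k l) = 0 := by
  rw [parallel_form_eq, h]
  refine Finset.sum_eq_zero fun k _ => Finset.sum_eq_zero fun j _ =>
    Finset.sum_eq_zero fun l _ => ?_
  by_cases hk : r = k
  · subst hk
    simp [hp]
  · simp [hk]

/-- Appendix B Claim: with M invertible, the subspace
N = {λ ∈ L_h : B(λ,p) = 0 for all p ∈ V_h} of the discrete Lagrange
multiplier space has dimension at least 2(m−1); in particular N ≠ {0}.
Here B(λ,p) = Σ_{i,k,j,l} λ_{ij} M_{ik} K_{jl} p_{kl},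
V_h = {p : p_{1,l} = p_{n,l} = 0 ∀l} (rows indexed by Fin n, row 1 = index 0,
row n = index n−1) and L_h = {λ : λ_{i,1} = 0 ∀i} (column 1 = index 0). -/
theorem discrete_lagrange_space_ill_posed
    (n m : ℕ) (hn : 2 ≤ n) (hm : 2 ≤ m)
    (M : Matrix (Fin n) (Fin n) ℝ) (hM : IsUnit M.det)
    (K : Matrix (Fin m) (Fin m) ℝ) :
    (∃ fam : Fin (2 * (m - 1)) → Matrix (Fin n) (Fin m) ℝ,
      LinearIndependent ℝ fam ∧
      ∀ a : Fin (2 * (m - 1)),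
        (∀ i : Fin n, fam a i (⟨0, by omega⟩ : Fin m) = 0) ∧
        (∀ p : Matrix (Fin n) (Fin m) ℝ,
          (∀ l : Fin m, p (⟨0, by omega⟩ : Fin n) l = 0 ∧
            p (⟨n - 1, by omega⟩ : Fin n) l = 0) →
          (∑ i : Fin n, ∑ k : Fin n, ∑ j : Fin m, ∑ l : Fin m,
            fam a i j * M i k * K j l * p k l) = 0)) ∧
    (∃ lam : Matrix (Fin n) (Fin m) ℝ, lam ≠ 0 ∧
      (∀ i : Fin n, lam i (⟨0, by omega⟩ : Fin m) = 0) ∧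
      ∀ p : Matrix (Fin n) (Fin m) ℝ,
        (∀ l : Fin m, p (⟨0, by omega⟩ : Fin n) l = 0 ∧
          p (⟨n - 1, by omega⟩ : Fin n) l = 0) →
        (∑ i : Fin n, ∑ k : Fin n, ∑ j : Fin m, ∑ l : Fin m,
          lam i j * M i k * K j l * p k l) = 0) := by
  -- `Fin 2` selects the boundary row; the column index is shifted to skip the first column.
  let e := (finProdFinEquiv (m := 2) (n := m - 1)).symm
  let row : Fin 2 → Fin n := ![⟨0, by omega⟩, ⟨n - 1, by omega⟩]
  let col : Fin (m - 1) → Fin m := fun j => ⟨j.1 + 1, by omega⟩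
  let fam : Fin (2 * (m - 1)) → Matrix (Fin n) (Fin m) ℝ := fun a =>
    M.transpose⁻¹ * Matrix.single (row (e a).1) (col (e a).2) (1 : ℝ)
  have hMt : IsUnit M.transpose.det := by rwa [Matrix.det_transpose]
  have hfam : ∀ a, M.transpose * fam a = Matrix.single (row (e a).1) (col (e a).2) 1 := fun a =>
    Matrix.mul_nonsing_inv_cancel_left _ _ hMt
  have hrow : Function.Injective row := by
    intro x y hxy
    fin_cases x <;> fin_cases y <;> simp [row] at hxy ⊢ <;> omega
  have hcol : Function.Injective col := by
    intro x y hxy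
    simp only [col, Fin.mk.injEq] at hxy
    exact Fin.ext (by omega)
  have hli : LinearIndependent ℝ fam := by
    apply LinearIndependent.of_comp (mulLeftLinearMap (Fin m) ℝ M.transpose)
    have h := (Matrix.stdBasis ℝ (Fin n) (Fin m)).linearIndependent.comp
      (fun a => Prod.map row col (e a)) ((hrow.prodMap hcol).comp e.injective)
    convert h using 1
    funext a
    simp only [Function.comp_apply, mulLeftLinearMap_apply, hfam]
    exact (Matrix.stdBasis_eq_single ..).symm
  have hzero : ∀ a (i : Fin n), fam a i (⟨0, by omega⟩ : Fin m) = 0 := by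
    intro a i
    simp [fam, col, Matrix.mul_apply]
  have hB : ∀ a (p : Matrix (Fin n) (Fin m) ℝ),
      (∀ l : Fin m, p (⟨0, by omega⟩ : Fin n) l = 0 ∧ p (⟨n - 1, by omega⟩ : Fin n) l = 0) →
      (∑ i : Fin n, ∑ k : Fin n, ∑ j : Fin m, ∑ l : Fin m,
        fam a i j * M i k * K j l * p k l) = 0 := by
    intro a p hp
    refine parallel_form_eq_zero M K _ p _ _ (hfam a) fun l => ?_
    generalize (e a).1 = s
    fin_cases s
    · exact (hp l).1
    · exact (hp l).2
  exact ⟨⟨fam, hli, fun a => ⟨hzero a, hB a⟩⟩,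
    fam ⟨0, by omega⟩, hli.ne_zero _, hzero _, hB _⟩
end
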